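/- Let K₁, K₂ be p-adic local fields with K = K₁ ∩ K₂, [K₁:K] = [K₂:K] = p, K₁/K and K₂/K Galois, K₁K₂/K totally ramified, and suppose each of K₁/K, K₂/K, K₁K₂/K₂, K₁K₂/K₁ has a unique ramification jump t₁, t₂, t₁', t₂' respectively, with t₁' < t₂'. Then t₁' = t₁ and t₂' = p·t₂ + (1−p)·t₁. -/

import Mathlib

/-- The `ℤ_[p]`-algebra structure on a field `L` over `ℚ_[p]`. -/
noncomputable def padicIntAlgebra (p : ℕ) [Fact p.Prime] (L : Type*) [Field L]
    [Algebra ℚ_[p] L] : Algebra ℤ_[p] L :=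
  ((algebraMap ℚ_[p] L).comp (algebraMap ℤ_[p] ℚ_[p])).toAlgebra

/-- The ring of integers of a `p`-adic field `L`, i.e. the integral closure of `ℤ_[p]` in `L`. -/
noncomputable def ringOfInt (p : ℕ) [Fact p.Prime] (L : Type*) [Field L]
    [Algebra ℚ_[p] L] : Subring L :=
  letI := padicIntAlgebra p L
  (integralClosure ℤ_[p] L).toSubring

/-- The maximal ideal of the ring of integers of `L` (its Jacobson radical). -/
noncomputable def maxIdeal (p : ℕ) [Fact p.Prime] (L : Type*) [Field L]
    [Algebra ℚ_[p] L] : Ideal (ringOfInt p L) :=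
  (⊥ : Ideal (ringOfInt p L)).jacobson

/-- The `i`-th ramification group (in lower numbering) of `L/K`, as a subset of `Gal(L/K)`:
`σ ∈ G_i` iff `σ x - x ∈ 𝔭_L ^ (i+1)` for every `x` in the ring of integers of `L`. -/
noncomputable def ramSet (p : ℕ) [Fact p.Prime] (K L : Type*) [Field K] [Field L]
    [Algebra ℚ_[p] L] [Algebra K L] (i : ℕ) : Set (L ≃ₐ[K] L) :=
  {σ | ∀ x : ringOfInt p L, ∃ y ∈ maxIdeal p L ^ (i + 1), (y : L) = σ (x : L) - (x : L)}

/-- `t` is a ramification jump of `L/K` if `G_t ≠ G_{t+1}`. -/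
noncomputable def IsRamJump (p : ℕ) [Fact p.Prime] (K L : Type*) [Field K] [Field L]
    [Algebra ℚ_[p] L] [Algebra K L] (t : ℕ) : Prop :=
  ramSet p K L t ≠ ramSet p K L (t + 1)

/-- `L/K` has a unique ramification jump, equal to `t`. -/
noncomputable def HasUniqueRamJump (p : ℕ) [Fact p.Prime] (K L : Type*) [Field K] [Field L]
    [Algebra ℚ_[p] L] [Algebra K L] (t : ℕ) : Prop :=
  IsRamJump p K L t ∧ ∀ t', IsRamJump p K L t' → t' = t

/-- Same as `HasUniqueRamJump`, with the `K`-algebra structure on `L` given by an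
explicit ring homomorphism. -/
noncomputable def HasUniqueRamJumpHom (p : ℕ) [Fact p.Prime] (K L : Type*) [Field K] [Field L]
    [Algebra ℚ_[p] L] (f : K →+* L) (t : ℕ) : Prop :=
  letI := f.toAlgebra
  HasUniqueRamJump p K L t

/-- The absolute ramification index `e(L|ℚ_p)`, i.e. the valuation of `p` in `L`. -/
noncomputable def eAbs (p : ℕ) [Fact p.Prime] (L : Type*) [Field L] [Algebra ℚ_[p] L] : ℕ :=
  sSup {n : ℕ | Ideal.span {(p : ringOfInt p L)} ≤ maxIdeal p L ^ n}

/-- The normalized valuation `v_L(x)` of an integral element `x` of `L`. -/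
noncomputable def valInt (p : ℕ) [Fact p.Prime] (L : Type*) [Field L] [Algebra ℚ_[p] L]
    (x : L) : ℕ :=
  sSup {n : ℕ | ∃ y ∈ maxIdeal p L ^ n, (y : L) = x}

/-!
Write `i_{L/F}(σ)` for the largest `n` such that `σ` acts trivially on the integers of `L` modulo
`𝔭_L ^ n`. If `M/K` is totally ramified with uniformizer `ϖ`, then `i_{M/K}(σ) = v_M(σ ϖ - ϖ)`, and
for a normal subextension `E/K` with `d = [M : E]` Serre's product formula says that
`d * i_{E/K}(s')` is the sum of `i_{M/K}(s t)` over `t ∈ Gal(M/E)`, for any lift `s` of `s'` to `M`.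

Let `a ≠ b` be the jumps of `M/E'` and `M/E`, and take for `s` a nontrivial element of `Gal(M/E')`.
The term `t = 1` is `a + 1`. For `t ≠ 1`, `s` and `t` move `ϖ` by different distances, so the
ultrametric inequality is an equality and the term is `min a b + 1`. Hence the jump `c` of `E/K`
satisfies `(a + 1) + (d - 1) * (min a b + 1) = d * (c + 1)`. Each of the two given fields can play
the role of `E`; the two resulting equations are solved for the jumps.
-/

section RingOfIntegers

open Polynomial

section SpectralNorm

variable {A K L : Type*} [CommRing A] [IsDomain A] [IsIntegrallyClosed A] [Field L] [Algebra A L]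

theorem isIntegral_iff_spectralNorm_le_one [NormedField K] [Algebra A K] [IsFractionRing A K]
    [Algebra K L] [IsScalarTower A K L] [Algebra.IsAlgebraic K L]
    (hA : ∀ a : K, ‖a‖ ≤ 1 ↔ a ∈ Set.range (algebraMap A K)) (x : L) :
    IsIntegral A x ↔ spectralNorm K L x ≤ 1 := by
  have hx : IsIntegral K x := Algebra.IsIntegral.isIntegral x
  rw [spectralNorm, spectralValue_le_one_iff (minpoly.monic hx)]
  constructor
  · intro h n
    rw [minpoly.isIntegrallyClosed_eq_field_fractions' K h, coeff_map, hA]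
    exact Set.mem_range_self _
  · intro h
    have hlifts : minpoly K x ∈ lifts (algebraMap A K) := by
      rw [lifts_iff_coeff_lifts]
      exact fun n => (hA _).1 (h n)
    obtain ⟨q, hq, -, hmonic⟩ := lifts_and_natDegree_eq_and_monic hlifts (minpoly.monic hx)
    refine ⟨q, hmonic, ?_⟩
    rw [IsScalarTower.algebraMap_eq A K L, ← eval₂_map, hq]
    exact minpoly.aeval _ _

theorem valuationRing_integralClosure [NontriviallyNormedField K] [IsUltrametricDist K]
    [CompleteSpace K] [Algebra A K] [IsFractionRing A K] [Algebra K L] [IsScalarTower A K L]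
    [Algebra.IsAlgebraic K L] (hA : ∀ a : K, ‖a‖ ≤ 1 ↔ a ∈ Set.range (algebraMap A K)) :
    ValuationRing (integralClosure A L) := by
  have : FaithfulSMul A L := by
    rw [faithfulSMul_iff_algebraMap_injective, IsScalarTower.algebraMap_eq A K L]
    exact (algebraMap K L).injective.comp (IsFractionRing.injective A K)
  have : Algebra.IsAlgebraic A L := (IsFractionRing.comap_isAlgebraic_iff (K := K)).2 ‹_›
  have : IsFractionRing (integralClosure A L) L :=
    integralClosure.isFractionRing_of_algebraic fun _ => (FaithfulSMul.algebraMap_eq_zero_iff A L).1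
  rw [ValuationRing.iff_isInteger_or_isInteger (integralClosure A L) L]
  have isInteger {y : L} (hy : spectralNorm K L y ≤ 1) :
      IsLocalization.IsInteger (integralClosure A L) y :=
    ⟨⟨y, (isIntegral_iff_spectralNorm_le_one hA y).2 hy⟩, rfl⟩
  intro x
  refine (le_total (spectralNorm K L x) 1).imp isInteger fun h => isInteger ?_
  simp only [← spectralMulAlgNorm_def] at h ⊢
  rw [map_inv₀]
  exact inv_le_one_of_one_le₀ h

end SpectralNorm

section Padic

theorem map_mem_ringOfInt {p : ℕ} [Fact p.Prime] {L L' : Type*} [Field L] [Field L']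
    [Algebra ℚ_[p] L] [Algebra ℚ_[p] L'] (f : L →ₐ[ℚ_[p]] L') {x : L} (hx : x ∈ ringOfInt p L) :
    f x ∈ ringOfInt p L' := by
  let _ := padicIntAlgebra p L
  let _ := padicIntAlgebra p L'
  have : IsScalarTower ℤ_[p] ℚ_[p] L := .of_algebraMap_eq fun _ => rfl
  have : IsScalarTower ℤ_[p] ℚ_[p] L' := .of_algebraMap_eq fun _ => rfl
  exact IsIntegral.map (f.restrictScalars ℤ_[p]) hx

variable (p : ℕ) [Fact p.Prime] (L : Type*) [Field L] [Algebra ℚ_[p] L]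

theorem not_isUnit_natCast_ringOfInt : ¬ IsUnit (p : ringOfInt p L) := by
  let _ := padicIntAlgebra p L
  have : IsScalarTower ℤ_[p] ℚ_[p] L := .of_algebraMap_eq fun _ => rfl
  have : FaithfulSMul ℤ_[p] L := by
    rw [faithfulSMul_iff_algebraMap_injective]
    exact (algebraMap ℚ_[p] L).injective.comp (IsFractionRing.injective ℤ_[p] ℚ_[p])
  intro h
  have h' : IsUnit (algebraMap ℤ_[p] (integralClosure ℤ_[p] L) p) := by
    rw [map_natCast]; exact h
  exact PadicInt.p_nonunit (isUnit_of_map_unit _ _ h')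

variable [FiniteDimensional ℚ_[p] L]

instance : IsFractionRing (ringOfInt p L) L := by
  let _ := padicIntAlgebra p L
  have : IsScalarTower ℤ_[p] ℚ_[p] L := .of_algebraMap_eq fun _ => rfl
  exact integralClosure.isFractionRing_of_finite_extension ℚ_[p] L

instance : ValuationRing (ringOfInt p L) := by
  let _ := padicIntAlgebra p L
  have : IsScalarTower ℤ_[p] ℚ_[p] L := .of_algebraMap_eq fun _ => rfl
  exact valuationRing_integralClosure (A := ℤ_[p]) (K := ℚ_[p]) (L := L)
    fun a => ⟨fun ha => ⟨⟨a, ha⟩, rfl⟩, fun ⟨z, hz⟩ => hz ▸ z.norm_le_one⟩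

instance : IsDiscreteValuationRing (ringOfInt p L) := by
  let _ := padicIntAlgebra p L
  have : IsScalarTower ℤ_[p] ℚ_[p] L := .of_algebraMap_eq fun _ => rfl
  have : CharZero L := charZero_of_injective_algebraMap (algebraMap ℚ_[p] L).injective
  have : IsNoetherianRing (ringOfInt p L) :=
    (integralClosure.isDedekindDomain ℤ_[p] ℚ_[p] L).toIsNoetherian
  have : IsPrincipalIdealRing (ringOfInt p L) := inferInstance
  refine { not_a_field' := fun h => ?_ }
  have hp : (p : ringOfInt p L) ∈ IsLocalRing.maximalIdeal _ := not_isUnit_natCast_ringOfInt p L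
  rw [h, Ideal.mem_bot, Nat.cast_eq_zero] at hp
  exact (Fact.out : p.Prime).ne_zero hp

end Padic

end RingOfIntegers

section NormalizedValuation

open WithZero IsDedekindDomain.HeightOneSpectrum

theorem exists_eq_exp_neg_natCast {γ : ℤᵐ⁰} (h₀ : γ ≠ 0) (h₁ : γ ≤ 1) :
    ∃ n : ℕ, γ = exp (-(n : ℤ)) := by
  have hlog : log γ ≤ 0 := by rwa [← exp_le_exp, exp_log h₀, exp_zero]
  obtain ⟨n, hn⟩ := Int.eq_ofNat_of_zero_le (neg_nonneg.2 hlog)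
  exact ⟨n, by rw [← hn, neg_neg, exp_log h₀]⟩

theorem exists_forall_valuation_eq_pow {L : Type*} [Field L] {v w : Valuation L ℤᵐ⁰} {ϖ : L}
    (hϖ : v ϖ = exp (-1)) (hvw : ∀ x, v x ≤ 1 → w x ≤ 1) :
    ∃ e : ℕ, ∀ x ≠ 0, w x = v x ^ e := by
  have eq_one {u : L} (hu : v u = 1) : w u = 1 := by
    have hu₀ : u ≠ 0 := v.ne_zero_iff.1 (hu ▸ one_ne_zero)
    refine le_antisymm (hvw u hu.le) ?_
    have hinv := hvw u⁻¹ (by rw [map_inv₀, hu, inv_one])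
    rwa [map_inv₀, inv_le_one₀ (zero_lt_iff.2 (w.ne_zero_iff.2 hu₀))] at hinv
  have hϖ₀ : ϖ ≠ 0 := v.ne_zero_iff.1 (hϖ ▸ exp_ne_zero)
  have hϖ₁ : v ϖ ≤ 1 := by rw [hϖ, ← exp_zero, exp_le_exp]; decide
  obtain ⟨e, he⟩ := exists_eq_exp_neg_natCast (w.ne_zero_iff.2 hϖ₀) (hvw ϖ hϖ₁)
  refine ⟨e, fun x hx => ?_⟩
  obtain ⟨m, hm⟩ : ∃ m, v x = exp m := ⟨_, (exp_log (v.ne_zero_iff.2 hx)).symm⟩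
  have hunit : w (x * ϖ ^ m) = 1 := eq_one <| by
    rw [map_mul, map_zpow₀, hm, hϖ, ← exp_zsmul, ← exp_add]
    simp
  rw [map_mul, map_zpow₀, he] at hunit
  rw [eq_inv_of_mul_eq_one_left hunit, hm, ← exp_zsmul, ← exp_nsmul, ← exp_neg]
  congr 1
  simp [mul_comm]

variable (p : ℕ) [Fact p.Prime]

section

variable (L : Type*) [Field L] [Algebra ℚ_[p] L] [FiniteDimensional ℚ_[p] L]

/-- The normalized valuation of a `p`-adic field, written multiplicatively: it takes the value
`exp (-n)` on elements of `v_L`-valuation `n`. -/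
noncomputable def normalizedValuation : Valuation L ℤᵐ⁰ :=
  (IsDiscreteValuationRing.maximalIdeal (ringOfInt p L)).valuation L

theorem maxIdeal_eq_maximalIdeal : maxIdeal p L = IsLocalRing.maximalIdeal (ringOfInt p L) :=
  IsLocalRing.jacobson_eq_maximalIdeal ⊥ bot_ne_top

theorem mem_ringOfInt_iff {x : L} : x ∈ ringOfInt p L ↔ normalizedValuation p L x ≤ 1 := by
  refine ⟨fun hx => valuation_le_one _ (⟨x, hx⟩ : ringOfInt p L), fun hx => ?_⟩
  obtain ⟨y, rfl⟩ := IsDiscreteValuationRing.exists_lift_of_le_one hx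
  exact y.2

theorem mem_maxIdeal_pow_iff {n : ℕ} {y : ringOfInt p L} :
    y ∈ maxIdeal p L ^ n ↔ normalizedValuation p L y ≤ exp (-(n : ℤ)) := by
  rw [maxIdeal_eq_maximalIdeal]
  refine (intValuation_le_pow_iff_mem (IsDiscreteValuationRing.maximalIdeal _) y n).symm.trans ?_
  rw [← valuation_of_algebraMap (K := L)]
  rfl

theorem exists_normalizedValuation_eq_exp_neg_one :
    ∃ ϖ, normalizedValuation p L ϖ = exp (-1) :=
  valuation_exists_uniformizer L _

theorem normalizedValuation_natCast_lt_one : normalizedValuation p L p < 1 := by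
  have hp : (p : ringOfInt p L) ∈ IsLocalRing.maximalIdeal _ := not_isUnit_natCast_ringOfInt p L
  rw [← pow_one (IsLocalRing.maximalIdeal _), ← maxIdeal_eq_maximalIdeal,
    mem_maxIdeal_pow_iff] at hp
  exact hp.trans_lt (by rw [← exp_zero, exp_lt_exp]; decide)

theorem normalizedValuation_natCast : normalizedValuation p L p = exp (-(eAbs p L : ℤ)) := by
  have : CharZero L := charZero_of_injective_algebraMap (algebraMap ℚ_[p] L).injective
  have hp₀ : (p : L) ≠ 0 := Nat.cast_ne_zero.2 (Fact.out : p.Prime).ne_zero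
  obtain ⟨n, hn⟩ := exists_eq_exp_neg_natCast ((normalizedValuation p L).ne_zero_iff.2 hp₀)
    (normalizedValuation_natCast_lt_one p L).le
  have hIic : {m : ℕ | Ideal.span {(p : ringOfInt p L)} ≤ maxIdeal p L ^ m} = Set.Iic n := by
    ext m
    rw [Set.mem_ofPred_eq, Ideal.span_singleton_le_iff_mem, mem_maxIdeal_pow_iff,
      Subring.coe_natCast, hn, exp_le_exp, neg_le_neg_iff, Nat.cast_le, Set.mem_Iic]
  rw [hn, eAbs, hIic, csSup_Iic]

theorem eAbs_pos : 0 < eAbs p L := by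
  have h := normalizedValuation_natCast_lt_one p L
  rw [normalizedValuation_natCast, ← exp_zero, exp_lt_exp] at h
  omega

end

variable {L L' : Type*} [Field L] [Field L'] [Algebra ℚ_[p] L] [Algebra ℚ_[p] L']
  [FiniteDimensional ℚ_[p] L] [FiniteDimensional ℚ_[p] L']

theorem exists_eAbs_eq_mul (f : L →ₐ[ℚ_[p]] L') :
    ∃ e : ℕ, eAbs p L' = e * eAbs p L ∧
      ∀ x, normalizedValuation p L' (f x) = normalizedValuation p L x ^ e := by
  have : CharZero L := charZero_of_injective_algebraMap (algebraMap ℚ_[p] L).injective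
  obtain ⟨ϖ, hϖ⟩ := exists_normalizedValuation_eq_exp_neg_one p L
  obtain ⟨e, he⟩ := exists_forall_valuation_eq_pow
    (w := (normalizedValuation p L').comap (f : L →+* L')) hϖ fun x hx =>
      (mem_ringOfInt_iff p L').1 (map_mem_ringOfInt f ((mem_ringOfInt_iff p L).2 hx))
  have heAbs : eAbs p L' = e * eAbs p L := by
    have hp := he p (Nat.cast_ne_zero.2 (Fact.out : p.Prime).ne_zero)
    rw [Valuation.comap_apply, map_natCast, normalizedValuation_natCast,
      normalizedValuation_natCast, ← exp_nsmul, exp_inj, nsmul_eq_mul] at hp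
    zify
    linarith
  refine ⟨e, heAbs, fun x => ?_⟩
  obtain rfl | hx := eq_or_ne x 0
  · have he₀ : e ≠ 0 := left_ne_zero_of_mul (heAbs ▸ (eAbs_pos p L').ne')
    simp [he₀]
  · exact he x hx

theorem normalizedValuation_algEquiv_apply (σ : L ≃ₐ[ℚ_[p]] L) (x : L) :
    normalizedValuation p L (σ x) = normalizedValuation p L x := by
  obtain ⟨e, heAbs, he⟩ := exists_eAbs_eq_mul p (σ : L →ₐ[ℚ_[p]] L)
  have he₁ : e = 1 := Nat.eq_of_mul_eq_mul_right (eAbs_pos p L) (by rw [← heAbs, one_mul])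
  simpa [he₁] using he x

end NormalizedValuation

section Displacement

open Polynomial

theorem prod_sub_dvd_eval_of_roots {R ι : Type*} [CommRing R] [IsDomain R] [Fintype ι] {g : R[X]}
    {r : ι → R} (hr : Function.Injective r) (hroot : ∀ i, g.eval (r i) = 0) (x : R) :
    ∏ i, (x - r i) ∣ g.eval x := by
  obtain rfl | hg := eq_or_ne g 0
  · simp
  have hle : Finset.univ.val.map r ≤ g.roots := by
    rw [Multiset.le_iff_subset (Finset.univ.nodup.map hr)]
    intro a ha
    obtain ⟨i, -, rfl⟩ := Multiset.mem_map.1 ha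
    exact (mem_roots hg).2 (hroot i)
  have hdvd : ∏ i, (X - C (r i)) ∣ g := by
    simpa using (Multiset.prod_X_sub_C_dvd_iff_le_roots hg _).2 hle
  simpa [eval_prod] using eval_dvd (x := x) hdvd

variable {M Γ₀ : Type*} [Field M] [LinearOrderedCommGroupWithZero Γ₀] {v : Valuation M Γ₀}

theorem mem_lifts_integer_iff {g : M[X]} :
    g ∈ lifts v.integer.subtype ↔ ∀ i, v (g.coeff i) ≤ 1 := by
  rw [lifts_iff_coeff_lifts, ← RingHom.coe_range, Subring.range_subtype]
  rfl

theorem valuation_coeff_prod_X_sub_C_le_one {ι : Type*} [Fintype ι] {r : ι → M}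
    (hr : ∀ i, v (r i) ≤ 1) (n : ℕ) : v ((∏ i, (X - C (r i))).coeff n) ≤ 1 :=
  mem_lifts_integer_iff.1 (prod_mem fun i _ => ⟨X - C ⟨r i, hr i⟩, by simp⟩) n

theorem exists_valuation_eval_le_valuation_coeff {g : M[X]} {x : M} (hx : v x ≤ 1) :
    ∃ i, v (g.eval x) ≤ v (g.coeff i) := by
  by_contra! h
  have hsum : v (∑ i ∈ Finset.range (g.natDegree + 1), g.coeff i * x ^ i) < v (g.eval x) := by
    refine v.map_sum_lt (pos_of_gt (h 0)).ne' fun i _ => ?_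
    rw [map_mul, map_pow]
    exact (mul_le_of_le_one_right' (pow_le_one' hx i)).trans_lt (h i)
  rw [← eval_eq_sum_range] at hsum
  exact hsum.false

theorem valuation_eval_le_prod_of_roots {ι : Type*} [Fintype ι] {g : M[X]}
    (hg : ∀ i, v (g.coeff i) ≤ 1) {r : ι → M} (hinj : Function.Injective r)
    (hr : ∀ i, v (r i) ≤ 1) (hroot : ∀ i, g.eval (r i) = 0) {x : M} (hx : v x ≤ 1) :
    v (g.eval x) ≤ ∏ i, v (x - r i) := by
  obtain ⟨q, rfl⟩ := mem_lifts_integer_iff.2 hg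
  have eval_map_integer (z : v.integer) :
      (mapRingHom v.integer.subtype q).eval (z : M) = (q.eval z : v.integer) :=
    eval_map_apply v.integer.subtype z
  let r' (i : ι) : v.integer := ⟨r i, hr i⟩
  obtain ⟨c, hc⟩ := prod_sub_dvd_eval_of_roots (g := q) (r := r')
    (fun i j h => hinj (congrArg Subtype.val h))
    (fun i => Subtype.ext ((eval_map_integer (r' i)).symm.trans (hroot i))) ⟨x, hx⟩
  rw [eval_map_integer ⟨x, hx⟩, hc, ← map_prod]
  push_cast
  rw [map_mul]
  exact mul_le_of_le_one_right' c.2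

/-- `γ` is the largest of the distances `v (σ x - x)` by which `σ` moves a `v`-integral element;
on the additive scale it is Serre's `i(σ)`. -/
def HasDisplacement (v : Valuation M Γ₀) (σ : M → M) (γ : Γ₀) : Prop :=
  IsGreatest ((fun x => v (σ x - x)) '' {x | v x ≤ 1}) γ

theorem HasDisplacement.exists_pow_eq {w : Valuation M Γ₀} {d : ℕ} (hd : d ≠ 0)
    (hw : ∀ x, w x = v x ^ d) {σ : M → M} {δ : Γ₀} (h : HasDisplacement w σ δ) :
    ∃ γ, HasDisplacement v σ γ ∧ γ ^ d = δ := by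
  obtain ⟨⟨x, hx, rfl⟩, hub⟩ := h
  rw [Set.mem_ofPred_eq, hw, pow_le_one_iff hd] at hx
  refine ⟨v (σ x - x), ⟨⟨x, hx, rfl⟩, ?_⟩, (hw _).symm⟩
  rintro _ ⟨z, hz, rfl⟩
  have hle : w (σ z - z) ≤ w (σ x - x) :=
    hub ⟨z, (hw z).trans_le (pow_le_one' hz d), rfl⟩
  rwa [hw, hw, pow_le_pow_iff_left₀ zero_le zero_le hd] at hle

/-- `x` generates the ring of `v`-integers of `M` as an algebra over the ring of `v`-integers
of `K`. -/
def IsIntegralGenerator (K : Type*) [Field K] [Algebra K M] (v : Valuation M Γ₀) (x : M) : Prop :=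
  ∀ z, z ∈ Algebra.adjoin (v.comap (algebraMap K M)).integer {x} ↔ v z ≤ 1

variable {K E : Type*} [Field K] [Field E] [Algebra K M]

theorem HasDisplacement.ne_zero {σ : M ≃ₐ[K] M} {γ : Γ₀} (h : HasDisplacement v σ γ)
    (hσ : σ ≠ 1) : γ ≠ 0 := by
  rintro rfl
  have fixes {z : M} (hz : v z ≤ 1) : σ z = z := by
    simpa [sub_eq_zero] using h.2 ⟨z, hz, rfl⟩
  refine hσ (AlgEquiv.ext fun z => ?_)
  obtain hz | hz := le_total (v z) 1
  · exact fixes hz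
  · have hinv := fixes (z := z⁻¹) (by rw [map_inv₀]; exact inv_le_one_of_one_le₀ hz)
    rwa [map_inv₀, inv_inj] at hinv

namespace IsIntegralGenerator

variable {x : M} (hx : IsIntegralGenerator K v x)
include hx

theorem valuation_le_one : v x ≤ 1 :=
  (hx x).1 (Algebra.self_mem_adjoin_singleton _ x)

theorem hasDisplacement {σ : M ≃ₐ[K] M} (hσ : ∀ z, v (σ z) = v z) :
    HasDisplacement v σ (v (σ x - x)) := by
  refine ⟨⟨x, hx.valuation_le_one, rfl⟩, ?_⟩
  rintro _ ⟨z, hz, rfl⟩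
  replace hz := (hx z).2 hz
  change v (σ z - z) ≤ v (σ x - x)
  induction hz using Algebra.adjoin_induction with
  | mem z hz => rw [Set.mem_singleton_iff.1 hz]
  | algebraMap a =>
    have : σ (algebraMap _ M a) = algebraMap _ M a := σ.commutes a
    simp [this]
  | add a b ha hb iha ihb =>
    rw [map_add, add_sub_add_comm]
    exact v.map_add_le iha ihb
  | mul a b ha hb iha ihb =>
    have hab : σ (a * b) - a * b = σ a * (σ b - b) + (σ a - a) * b := by rw [map_mul]; ring
    rw [hab]
    refine v.map_add_le ?_ ?_ <;> rw [map_mul]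
    · exact (mul_le_of_le_one_left' ((hσ a).trans_le ((hx a).1 ha))).trans ihb
    · exact (mul_le_of_le_one_right' ((hx b).1 hb)).trans iha

variable (hv : ∀ (σ : M ≃ₐ[K] M) z, v (σ z) = v z)
include hv

theorem injective_apply : Function.Injective fun σ : M ≃ₐ[K] M => σ x := by
  intro σ τ (h : σ x = τ x)
  by_contra! hne
  have hfix : (τ⁻¹ * σ) x = x := by rw [AlgEquiv.mul_apply, h]; exact τ.symm_apply_apply x
  refine (hx.hasDisplacement (hv (τ⁻¹ * σ))).ne_zero (fun h₁ => hne ?_) (by simp [hfix])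
  exact (inv_mul_eq_one.1 h₁).symm

variable [Algebra E M] [Algebra K E] [IsScalarTower K E M] [FiniteDimensional E M]

theorem valuation_map_sub_le_prod (s : M ≃ₐ[K] M) {y : E} (hy : v (algebraMap E M y) ≤ 1) :
    v (s (algebraMap E M y) - algebraMap E M y) ≤ ∏ t : M ≃ₐ[E] M, v (s (t x) - x) := by
  have hxs (t : M ≃ₐ[E] M) : v (s (t x)) ≤ 1 :=
    ((hv s _).trans (hv (t.restrictScalars K) x)).trans_le hx.valuation_le_one
  have hinj : Function.Injective fun t : M ≃ₐ[E] M => s (t x) := fun t t' h =>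
    AlgEquiv.restrictScalars_injective K (hx.injective_apply hv (s.injective h))
  -- If `y = g(x)`, then `g - s y` vanishes at every `s (t x)` and has the value `y - s y` at `x`.
  let O := (v.comap (algebraMap K M)).integer
  obtain ⟨g, hg⟩ : ∃ g : O[X], aeval x g = algebraMap E M y := by
    have hmem := (hx (algebraMap E M y)).2 hy
    rwa [Algebra.adjoin_singleton_eq_range_aeval] at hmem
  have aeval_apply (σ : M ≃ₐ[K] M) : aeval (σ x) g = σ (algebraMap E M y) := by
    rw [← hg]
    exact aeval_algHom_apply (σ.restrictScalars O) x g
  let G : M[X] := g.map (algebraMap O M) - C (s (algebraMap E M y))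
  have hcoeff (i : ℕ) : v (G.coeff i) ≤ 1 := by
    rw [coeff_sub, coeff_map, coeff_C]
    refine v.map_sub_le (g.coeff i).2 ?_
    split_ifs
    · exact (hv s _).trans_le hy
    · simp
  have hroot (t : M ≃ₐ[E] M) : G.eval (s (t x)) = 0 := by
    rw [eval_sub, eval_map_algebraMap, eval_C, sub_eq_zero]
    exact (aeval_apply (s * t.restrictScalars K)).trans (congrArg s (t.commutes y))
  have hle := valuation_eval_le_prod_of_roots hcoeff hinj hxs hroot hx.valuation_le_one
  simp only [v.map_sub_swap x] at hle
  rwa [eval_sub, eval_map_algebraMap, eval_C, hg, v.map_sub_swap] at hle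

end IsIntegralGenerator

variable [Algebra E M] [FiniteDimensional E M]

theorem exists_prod_valuation_map_sub_le [IsGalois E M]
    (hv : ∀ (t : M ≃ₐ[E] M) z, v (t z) = v z) {x : M} (hx : v x ≤ 1) (s : M →+* M) :
    ∃ y : E, v (algebraMap E M y) ≤ 1 ∧
      ∏ t : M ≃ₐ[E] M, v (s (t x) - x) ≤ v (s (algebraMap E M y) - algebraMap E M y) := by
  -- The coefficients of `P` descend to `E`, and one of them moves at least as far as the product.
  set P : M[X] := MulSemiringAction.charpoly (M ≃ₐ[E] M) x
  have hP : P = ∏ t : M ≃ₐ[E] M, (X - C (t x)) := rfl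
  have hcoeff : ∀ i, v (P.coeff i) ≤ 1 :=
    valuation_coeff_prod_X_sub_C_le_one fun t => (hv t x).trans_le hx
  have heval : (P.map s - P).eval x = ∏ t : M ≃ₐ[E] M, (x - s (t x)) := by
    rw [eval_sub, MulSemiringAction.eval_charpoly, sub_zero, hP]
    simp [Polynomial.map_prod, eval_prod]
  obtain ⟨i, hi⟩ := exists_valuation_eval_le_valuation_coeff (g := P.map s - P) hx
  obtain ⟨Q, hQ⟩ := Algebra.IsInvariant.charpoly_mem_lifts E M (M ≃ₐ[E] M) x
  have hQi : algebraMap E M (Q.coeff i) = P.coeff i := by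
    rw [← coeff_map]; exact congr_arg (coeff · i) hQ
  refine ⟨Q.coeff i, hQi ▸ hcoeff i, ?_⟩
  rw [heval, map_prod, coeff_sub, coeff_map, ← hQi] at hi
  simpa only [v.map_sub_swap x] using hi

theorem IsIntegralGenerator.hasDisplacement_comap [Algebra K E] [IsScalarTower K E M] [IsGalois E M]
    {x : M} (hx : IsIntegralGenerator K v x) (hv : ∀ (σ : M ≃ₐ[K] M) z, v (σ z) = v z)
    {s : M ≃ₐ[K] M} {s' : E ≃ₐ[K] E} (hs : ∀ z, algebraMap E M (s' z) = s (algebraMap E M z)) :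
    HasDisplacement (v.comap (algebraMap E M)) s' (∏ t : M ≃ₐ[E] M, v (s (t x) - x)) := by
  have hval (y : E) : (v.comap (algebraMap E M)) (s' y - y) =
      v (s (algebraMap E M y) - algebraMap E M y) := by
    rw [Valuation.comap_apply, map_sub, hs]
  have hub : ∀ y : E, v (algebraMap E M y) ≤ 1 →
      (v.comap (algebraMap E M)) (s' y - y) ≤ ∏ t : M ≃ₐ[E] M, v (s (t x) - x) :=
    fun y hy => (hval y).trans_le (hx.valuation_map_sub_le_prod hv s hy)
  obtain ⟨y, hy, hle⟩ := exists_prod_valuation_map_sub_le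
    (fun t : M ≃ₐ[E] M => hv (t.restrictScalars K)) hx.valuation_le_one (s : M →+* M)
  exact ⟨⟨y, hy, (hub y hy).antisymm (hle.trans_eq (hval y).symm)⟩,
    Set.forall_mem_image.2 hub⟩

end Displacement

section TotallyRamified

open WithZero Module

theorem valuation_le_valuation_sum {L Γ₀ ι : Type*} [Field L] [LinearOrderedCommGroupWithZero Γ₀]
    {v : Valuation L Γ₀} {s : Finset ι} {f : ι → L}
    (hf : ∀ i ∈ s, ∀ j ∈ s, f j ≠ 0 → v (f i) = v (f j) → i = j) {j : ι} (hj : j ∈ s) :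
    v (f j) ≤ v (∑ i ∈ s, f i) := by
  classical
  obtain ⟨k, hk, hmax⟩ := s.exists_max_image (fun i => v (f i)) ⟨j, hj⟩
  obtain h₀ | h₀ := eq_or_ne (f k) 0
  · exact (hmax j hj).trans (by simp [h₀])
  refine (hmax j hj).trans_eq (v.map_sum_eq_of_lt hk fun i hi => ?_).symm
  obtain ⟨his, hik⟩ := Finset.mem_sdiff.1 hi
  exact (hmax i his).lt_of_ne fun h => hik (Finset.mem_singleton.2 (hf i his k hk h₀ h))

section Uniformizer

variable {K L : Type*} [Field K] [Field L] [Algebra K L] {v : Valuation K ℤᵐ⁰}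
  {w : Valuation L ℤᵐ⁰} {e : ℕ} (he : ∀ a, w (algebraMap K L a) = v a ^ e) {ϖ : L}
  (hϖ : w ϖ = exp (-1))
include he hϖ

theorem valuation_smul_pow {a : K} (ha : a ≠ 0) (i : ℕ) :
    w (a • ϖ ^ i) = exp (e * log (v a) - i) := by
  rw [Algebra.smul_def, map_mul, map_pow, he, hϖ, ← exp_log (v.ne_zero_iff.2 ha), ← exp_nsmul,
    ← exp_nsmul, ← exp_add, log_exp]
  simp [sub_eq_add_neg]

theorem valuation_smul_pow_le_valuation_sum (a : Fin e → K) (j : Fin e) :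
    w (a j • ϖ ^ (j : ℕ)) ≤ w (∑ i, a i • ϖ ^ (i : ℕ)) := by
  -- The nonzero terms have valuations in distinct residue classes modulo `e`.
  refine valuation_le_valuation_sum (v := w) (f := fun i => a i • ϖ ^ (i : ℕ))
    (fun i _ k _ hk₀ hik => ?_) (Finset.mem_univ j)
  have hi₀ : a i • ϖ ^ (i : ℕ) ≠ 0 := w.ne_zero_iff.1 (hik ▸ w.ne_zero_iff.2 hk₀)
  rw [valuation_smul_pow he hϖ (left_ne_zero_of_smul hi₀),
    valuation_smul_pow he hϖ (left_ne_zero_of_smul hk₀), exp_inj] at hik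
  have hmod : ((i : ℕ) : ℤ) ≡ (k : ℕ) [ZMOD e] :=
    Int.modEq_iff_dvd.2 ⟨log (v (a k)) - log (v (a i)), by linear_combination hik⟩
  exact Fin.ext ((Int.natCast_modEq_iff.1 hmod).eq_of_lt_of_lt i.2 k.2)

theorem linearIndependent_uniformizer_pow :
    LinearIndependent K fun i : Fin e => ϖ ^ (i : ℕ) := by
  have hϖ₀ : ϖ ≠ 0 := w.ne_zero_iff.1 (hϖ ▸ exp_ne_zero)
  rw [Fintype.linearIndependent_iff]
  intro a ha j
  have hle := valuation_smul_pow_le_valuation_sum he hϖ a j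
  rw [ha, map_zero, le_zero_iff, w.zero_iff, smul_eq_zero] at hle
  exact hle.resolve_right (pow_ne_zero _ hϖ₀)

theorem valuation_algebraMap_le_one_of_valuation_smul_pow_le_one {a : K} {i : ℕ} (hi : i < e)
    (h : w (a • ϖ ^ i) ≤ 1) : w (algebraMap K L a) ≤ 1 := by
  obtain rfl | ha := eq_or_ne a 0
  · simp
  have hw := valuation_smul_pow he hϖ ha 0
  rw [valuation_smul_pow he hϖ ha, ← exp_zero, exp_le_exp] at h
  rw [pow_zero, Algebra.smul_def, mul_one] at hw
  rw [hw, ← exp_zero, exp_le_exp]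
  have hlog : log (v a) ≤ 0 := by
    by_contra! hpos
    nlinarith
  simpa using mul_nonpos_of_nonneg_of_nonpos (Nat.cast_nonneg e) hlog

theorem isIntegralGenerator_of_eq_finrank [FiniteDimensional K L] (hfin : e = finrank K L) :
    IsIntegralGenerator K w ϖ := by
  have hϖ₁ : w ϖ ≤ 1 := by rw [hϖ, ← exp_zero, exp_le_exp]; decide
  refine fun z => ⟨fun hz => ?_, fun hz => ?_⟩
  · induction hz using Algebra.adjoin_induction with
    | mem y hy => rwa [Set.mem_singleton_iff.1 hy]
    | algebraMap a => exact a.2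
    | add y z _ _ hy hz => exact w.map_add_le hy hz
    | mul y z _ _ hy hz => rw [map_mul]; exact mul_le_one' hy hz
  · have : Nonempty (Fin e) := ⟨0, hfin ▸ finrank_pos⟩
    have hspan := (linearIndependent_uniformizer_pow he hϖ).span_eq_top_of_card_eq_finrank
      (by simpa using hfin)
    obtain ⟨a, rfl⟩ := (Submodule.mem_span_range_iff_exists_fun K).1
      (hspan.symm ▸ Submodule.mem_top : z ∈ _)
    refine sum_mem fun i _ => ?_
    have hai : w (algebraMap K L (a i)) ≤ 1 :=
      valuation_algebraMap_le_one_of_valuation_smul_pow_le_one he hϖ i.2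
        ((valuation_smul_pow_le_valuation_sum he hϖ a i).trans hz)
    exact Subalgebra.smul_mem _ (pow_mem (Algebra.self_mem_adjoin_singleton _ ϖ) _)
      (⟨a i, hai⟩ : (w.comap (algebraMap K L)).integer)

end Uniformizer

variable (p : ℕ) [Fact p.Prime] (K L : Type*) [Field K] [Field L] [Algebra ℚ_[p] K]
  [Algebra ℚ_[p] L] [Algebra K L]

/-- `L/K` is totally ramified, i.e. its ramification index, which is the quotient of the absolute
ramification indices of `L` and `K`, is `[L : K]`. -/
def IsTotallyRamified : Prop :=
  eAbs p L = finrank K L * eAbs p K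

variable [FiniteDimensional ℚ_[p] K] [FiniteDimensional ℚ_[p] L]

theorem exists_eAbs_eq_mul_le_finrank [IsScalarTower ℚ_[p] K L] :
    ∃ e ≤ finrank K L, eAbs p L = e * eAbs p K ∧
      ∀ a, normalizedValuation p L (algebraMap K L a) = normalizedValuation p K a ^ e := by
  have : FiniteDimensional K L := FiniteDimensional.right ℚ_[p] K L
  obtain ⟨e, heAbs, he⟩ := exists_eAbs_eq_mul p (IsScalarTower.toAlgHom ℚ_[p] K L)
  obtain ⟨ϖ, hϖ⟩ := exists_normalizedValuation_eq_exp_neg_one p L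
  refine ⟨e, ?_, heAbs, he⟩
  simpa using (linearIndependent_uniformizer_pow he hϖ).fintype_card_le_finrank

namespace IsTotallyRamified

variable {p K L}

theorem tower_top (h : IsTotallyRamified p K L) (E : Type*) [Field E] [Algebra ℚ_[p] E]
    [FiniteDimensional ℚ_[p] E] [Algebra K E] [Algebra E L] [IsScalarTower ℚ_[p] K E]
    [IsScalarTower ℚ_[p] E L] [IsScalarTower K E L] : IsTotallyRamified p E L := by
  have : FiniteDimensional E L := FiniteDimensional.right ℚ_[p] E L
  obtain ⟨e, he, heAbs, -⟩ := exists_eAbs_eq_mul_le_finrank p K E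
  obtain ⟨f, hf, hfAbs, -⟩ := exists_eAbs_eq_mul_le_finrank p E L
  refine le_antisymm (hfAbs.trans_le (Nat.mul_le_mul_right _ hf)) ?_
  calc finrank E L * eAbs p E ≤ finrank E L * (finrank K E * eAbs p K) := by
        rw [heAbs]; gcongr
    _ = eAbs p L := by rw [h, ← finrank_mul_finrank K E L]; ring

variable [IsScalarTower ℚ_[p] K L]

theorem normalizedValuation_algebraMap (h : IsTotallyRamified p K L) (a : K) :
    normalizedValuation p L (algebraMap K L a) = normalizedValuation p K a ^ finrank K L := by
  obtain ⟨e, -, heAbs, he⟩ := exists_eAbs_eq_mul_le_finrank p K L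
  rw [he, Nat.eq_of_mul_eq_mul_right (eAbs_pos p K) (heAbs.symm.trans h)]

theorem isIntegralGenerator (h : IsTotallyRamified p K L) {ϖ : L}
    (hϖ : normalizedValuation p L ϖ = exp (-1)) :
    IsIntegralGenerator K (normalizedValuation p L) ϖ :=
  have : FiniteDimensional K L := FiniteDimensional.right ℚ_[p] K L
  isIntegralGenerator_of_eq_finrank h.normalizedValuation_algebraMap hϖ rfl

end IsTotallyRamified

end TotallyRamified

section RamificationJumps

open WithZero Module

variable {p : ℕ} [Fact p.Prime] {K L : Type*} [Field K] [Field L] [Algebra ℚ_[p] L] [Algebra K L]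

theorem one_mem_ramSet (i : ℕ) : (1 : L ≃ₐ[K] L) ∈ ramSet p K L i :=
  fun x => ⟨0, zero_mem _, by simp⟩

theorem HasUniqueRamJump.exists_ne_one {t : ℕ} (ht : HasUniqueRamJump p K L t) :
    ∃ σ : L ≃ₐ[K] L, σ ≠ 1 := by
  by_contra! h
  exact ht.1 (Set.ext fun σ => by simp [h σ, one_mem_ramSet])

variable [FiniteDimensional ℚ_[p] L] {σ : L ≃ₐ[K] L} {γ : ℤᵐ⁰}

theorem HasDisplacement.mem_ramSet_iff (h : HasDisplacement (normalizedValuation p L) σ γ)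
    {i : ℕ} : σ ∈ ramSet p K L i ↔ γ ≤ exp (-((i : ℤ) + 1)) := by
  constructor
  · intro hσ
    obtain ⟨x, hx, rfl⟩ := h.1
    obtain ⟨y, hy, hyx⟩ := hσ ⟨x, (mem_ringOfInt_iff p L).2 hx⟩
    rw [mem_maxIdeal_pow_iff, hyx] at hy
    exact_mod_cast hy
  · intro hγ x
    have hle : normalizedValuation p L (σ x - x) ≤ exp (-((i : ℤ) + 1)) :=
      (h.2 ⟨x, (mem_ringOfInt_iff p L).1 x.2, rfl⟩).trans hγ
    have hle_one : exp (-((i : ℤ) + 1)) ≤ (1 : ℤᵐ⁰) := by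
      rw [← exp_zero, exp_le_exp]; omega
    refine ⟨⟨σ x - x, (mem_ringOfInt_iff p L).2 (hle.trans hle_one)⟩, ?_, rfl⟩
    rw [mem_maxIdeal_pow_iff]
    exact_mod_cast hle

theorem HasUniqueRamJump.displacement_eq {t : ℕ} (ht : HasUniqueRamJump p K L t)
    (hσ : HasDisplacement (normalizedValuation p L) σ γ) (h₀ : γ ≠ 0) (h₁ : γ < 1) :
    γ = exp (-((t : ℤ) + 1)) := by
  obtain ⟨m, rfl⟩ := exists_eq_exp_neg_natCast h₀ h₁.le
  rw [← exp_zero, exp_lt_exp] at h₁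
  obtain ⟨n, rfl⟩ : ∃ n, m = n + 1 := Nat.exists_eq_succ_of_ne_zero (by omega)
  have hjump : IsRamJump p K L n := by
    intro heq
    have hmem : σ ∈ ramSet p K L n := by rw [hσ.mem_ramSet_iff]; push_cast; exact le_rfl
    rw [heq, hσ.mem_ramSet_iff, exp_le_exp] at hmem
    omega
  rw [← ht.2 n hjump]
  push_cast
  rfl

theorem HasUniqueRamJump.finrank_mul_eq {t d : ℕ} (ht : HasUniqueRamJump p K L t)
    (hσ : HasDisplacement (normalizedValuation p L) σ γ) {n : ℤ} (hγ : γ ^ d = exp (-n))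
    (hn : 0 < n) : (d : ℤ) * (t + 1) = n := by
  have hγ₁ : γ ^ d < 1 := by rw [hγ, ← exp_zero, exp_lt_exp]; omega
  have hd : d ≠ 0 := by rintro rfl; simp at hγ₁
  have hγ₀ : γ ≠ 0 := by rintro rfl; rw [zero_pow hd] at hγ; exact exp_ne_zero hγ.symm
  rw [ht.displacement_eq hσ hγ₀ ((pow_lt_one_iff hd).1 hγ₁), ← exp_nsmul, exp_inj, nsmul_eq_mul,
    mul_neg, neg_inj] at hγ
  exact hγ

theorem HasUniqueRamJump.valuation_map_sub_eq [Algebra ℚ_[p] K] [FiniteDimensional ℚ_[p] K]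
    [IsScalarTower ℚ_[p] K L] {t : ℕ} (ht : HasUniqueRamJump p K L t)
    (htot : IsTotallyRamified p K L) {ϖ : L} (hϖ : normalizedValuation p L ϖ = exp (-1))
    (hσ : σ ≠ 1) : normalizedValuation p L (σ ϖ - ϖ) = exp (-((t : ℤ) + 1)) := by
  have hv (z : L) : normalizedValuation p L (σ z) = normalizedValuation p L z :=
    normalizedValuation_algEquiv_apply p (σ.restrictScalars ℚ_[p]) z
  have hdisp := (htot.isIntegralGenerator hϖ).hasDisplacement hv
  refine ht.displacement_eq hdisp (hdisp.ne_zero hσ) ?_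
  refine ((normalizedValuation p L).map_sub_le ((hv ϖ).trans hϖ).le hϖ.le).trans_lt ?_
  rw [← exp_zero, exp_lt_exp]
  decide

end RamificationJumps

section Compositum

open WithZero Module

theorem valuation_map_sub_eq_max {M Γ₀ : Type*} [Field M] [LinearOrderedCommGroupWithZero Γ₀]
    {v : Valuation M Γ₀} {F : Type*} [FunLike F M M] [RingHomClass F M M] {s : F}
    (hs : ∀ z, v (s z) = v z) {x y : M} (h : v (s x - x) ≠ v (y - x)) :
    v (s y - x) = max (v (s x - x)) (v (y - x)) := by
  have hsplit : s y - x = (s x - x) + s (y - x) := by rw [map_sub]; ring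
  rw [hsplit, v.map_add_of_distinct_val (by rwa [hs]), hs]

theorem prod_valuation_map_sub_eq {E M Γ₀ : Type*} [Field E] [Field M] [Algebra E M]
    [FiniteDimensional E M] [IsGalois E M] [LinearOrderedCommGroupWithZero Γ₀]
    {v : Valuation M Γ₀} {F : Type*} [FunLike F M M] [RingHomClass F M M] {s : F}
    (hs : ∀ z, v (s z) = v z) {x : M} {β : Γ₀}
    (hβ : ∀ t : M ≃ₐ[E] M, t ≠ 1 → v (t x - x) = β) (hne : v (s x - x) ≠ β) :
    ∏ t : M ≃ₐ[E] M, v (s (t x) - x) =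
      v (s x - x) * max (v (s x - x)) β ^ (finrank E M - 1) := by
  classical
  have hmoved : ∀ t ∈ Finset.univ.erase (1 : M ≃ₐ[E] M),
      v (s (t x) - x) = max (v (s x - x)) β := by
    intro t ht
    have htβ := hβ t (Finset.ne_of_mem_erase ht)
    rw [valuation_map_sub_eq_max hs (htβ ▸ hne), htβ]
  have hcard : (Finset.univ.erase (1 : M ≃ₐ[E] M)).card = finrank E M - 1 := by
    rw [Finset.card_erase_of_mem (Finset.mem_univ _), Finset.card_univ, Fintype.card_eq_nat_card,
      IsGalois.card_aut_eq_finrank]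
  rw [← Finset.mul_prod_erase _ _ (Finset.mem_univ 1), Finset.prod_eq_pow_card hmoved, hcard]
  rfl

theorem exp_mul_max_exp_pow (x y : ℤ) {d : ℕ} (hd : 0 < d) :
    exp x * max (exp x) (exp y) ^ (d - 1) = exp (x + (d - 1) * max x y) := by
  have exp_mono : Monotone (exp : ℤ → ℤᵐ⁰) := fun _ _ => exp_le_exp.2
  rw [← exp_mono.map_max, ← exp_nsmul, ← exp_add, nsmul_eq_mul, Nat.cast_sub hd, Nat.cast_one]

theorem isGalois_of_sup_eq_top {K M : Type*} [Field K] [Field M] [Algebra K M]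
    {E₁ E₂ : IntermediateField K M} (h : E₁ ⊔ E₂ = ⊤) [IsGalois K E₁] [IsGalois K E₂] :
    IsGalois K M := by
  have hgal : IsGalois K ↥(E₁ ⊔ E₂) := inferInstance
  rw [h] at hgal
  exact .of_algEquiv IntermediateField.topEquiv

variable {p : ℕ} [Fact p.Prime] {K M : Type*} [Field K] [Field M] [Algebra ℚ_[p] K]
  [Algebra ℚ_[p] M] [Algebra K M] [IsScalarTower ℚ_[p] K M] [FiniteDimensional ℚ_[p] M]

theorem HasUniqueRamJump.add_finrank_sub_one_mul_min_eq [IsGalois K M]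
    {E E' : IntermediateField K M} [Normal K E] (htot : IsTotallyRamified p K M) {a b c : ℕ}
    (ha : HasUniqueRamJump p E' M a) (hb : HasUniqueRamJump p E M b)
    (hc : HasUniqueRamJump p K E c) (hab : a ≠ b) :
    (a + 1 : ℤ) + (finrank E M - 1) * (min a b + 1) = finrank E M * (c + 1) := by
  have tower (F : IntermediateField K M) : IsScalarTower ℚ_[p] F M :=
    .of_algebraMap_eq fun _ => rfl
  have finDim (F : IntermediateField K M) : FiniteDimensional ℚ_[p] F :=
    have := tower F
    .left ℚ_[p] F M
  have : FiniteDimensional ℚ_[p] K := .left ℚ_[p] K M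
  have : FiniteDimensional K M := .right ℚ_[p] K M
  have hv (σ : M ≃ₐ[K] M) (z : M) : normalizedValuation p M (σ z) = normalizedValuation p M z :=
    normalizedValuation_algEquiv_apply p (σ.restrictScalars ℚ_[p]) z
  obtain ⟨ϖ, hϖ⟩ := exists_normalizedValuation_eq_exp_neg_one p M
  obtain ⟨s, hs⟩ := ha.exists_ne_one
  let s₀ : M ≃ₐ[K] M := s.restrictScalars K
  have hα : normalizedValuation p M (s₀ ϖ - ϖ) = exp (-((a : ℤ) + 1)) :=
    ha.valuation_map_sub_eq (htot.tower_top E') hϖ hs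
  have hprod := prod_valuation_map_sub_eq (hv s₀)
    (fun t : M ≃ₐ[E] M => hb.valuation_map_sub_eq (htot.tower_top E) hϖ)
    (hα.trans_ne (by simpa using hab))
  obtain ⟨γ, hγ, hγpow⟩ := ((htot.isIntegralGenerator hϖ).hasDisplacement_comap hv
    (AlgEquiv.restrictNormal_commutes s₀ E)).exists_pow_eq finrank_pos.ne'
    (htot.tower_top E).normalizedValuation_algebraMap
  have hd : (1 : ℤ) ≤ finrank E M := by exact_mod_cast finrank_pos (R := E) (M := M)
  have hpow : γ ^ finrank E M = exp (-((a + 1 : ℤ) + (finrank E M - 1) * (min a b + 1))) := by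
    rw [hγpow, hprod, hα, exp_mul_max_exp_pow _ _ finrank_pos, max_neg_neg, min_add_add_right]
    congr 1
    push_cast
    ring
  exact (hc.finrank_mul_eq hγ hpow (by positivity)).symm

theorem jumps_of_biquadratic_general [IsGalois K M] {E₁ E₂ : IntermediateField K M}
    [Normal K E₁] [Normal K E₂] (htotram : IsTotallyRamified p K M) {t₁ t₂ t₁' t₂' : ℕ}
    (ht₁ : HasUniqueRamJump p K E₁ t₁) (ht₂ : HasUniqueRamJump p K E₂ t₂)
    (ht₁' : HasUniqueRamJump p E₂ M t₁') (ht₂' : HasUniqueRamJump p E₁ M t₂') (hlt : t₁' < t₂') :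
    t₁' = t₁ ∧ (t₂' : ℤ) = finrank E₂ M * t₂ + (1 - finrank E₂ M) * t₁ := by
  have : FiniteDimensional K M := .right ℚ_[p] K M
  have h₁ := ht₁'.add_finrank_sub_one_mul_min_eq htotram ht₂' ht₁ hlt.ne
  have h₂ := ht₂'.add_finrank_sub_one_mul_min_eq htotram ht₁' ht₂ hlt.ne'
  rw [min_eq_left (by exact_mod_cast hlt.le)] at h₁
  rw [min_eq_right (by exact_mod_cast hlt.le)] at h₂
  have hd : (finrank E₁ M : ℤ) ≠ 0 := by exact_mod_cast finrank_pos.ne'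
  have ht : (t₁' : ℤ) = t₁ := mul_left_cancel₀ hd (by linear_combination h₁)
  exact ⟨by exact_mod_cast ht, by rw [← ht]; linear_combination h₂⟩

end Compositum

/-- Let `K₁, K₂` be `p`-adic local fields with `K = K₁ ∩ K₂`, `[K₁:K] = [K₂:K] = p`,
`K₁/K` and `K₂/K` Galois, `K₁K₂/K` totally ramified, and suppose `K₁/K`, `K₂/K`,
`K₁K₂/K₂`, `K₁K₂/K₁` have unique ramification jumps `t₁, t₂, t₁', t₂'` respectively,
with `t₁' < t₂'`.  Then `t₁' = t₁` and `t₂' = p·t₂ + (1-p)·t₁`. -/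
theorem jumps_of_biquadratic (p : ℕ) [Fact p.Prime] (K M : Type*) [Field K] [Field M]
    [Algebra ℚ_[p] K] [Algebra ℚ_[p] M] [Algebra K M] [IsScalarTower ℚ_[p] K M]
    [FiniteDimensional ℚ_[p] M]
    (E₁ E₂ : IntermediateField K M)
    (hinf : E₁ ⊓ E₂ = ⊥) (hsup : E₁ ⊔ E₂ = ⊤)
    [IsGalois K ↥E₁] [IsGalois K ↥E₂]
    (htotram : eAbs p M = Module.finrank K M * eAbs p K)
    (hd₁ : Module.finrank K ↥E₁ = p) (hd₂ : Module.finrank K ↥E₂ = p)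
    (t₁ t₂ t₁' t₂' : ℕ)
    (ht₁ : HasUniqueRamJump p K ↥E₁ t₁) (ht₂ : HasUniqueRamJump p K ↥E₂ t₂)
    (ht₁' : HasUniqueRamJump p ↥E₂ M t₁') (ht₂' : HasUniqueRamJump p ↥E₁ M t₂')
    (hlt : t₁' < t₂') :
    t₁' = t₁ ∧ (t₂' : ℤ) = p * t₂ + (1 - p) * t₁ := by
  have := FiniteDimensional.right ℚ_[p] K M
  have := isGalois_of_sup_eq_top hsup
  have hd : Module.finrank E₂ M = p :=
    ((IntermediateField.LinearDisjoint.of_inf_eq_bot hinf).finrank_right_eq_finrank hsup).trans hd₁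
  simpa only [hd] using jumps_of_biquadratic_general htotram ht₁ ht₂ ht₁' ht₂' hlt
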